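/- Let T be a homeomorphism of a compact topological space X, V a Banach space, and A a continuous linear cocycle over T with every A^n_x injective. Let k ≥ 1, and suppose there exist two continuous equivariant splittings V = 𝓔_1(x) ⊕ 𝓕_1(x) = 𝓔_2(x) ⊕ 𝓕_2(x) into closed subspaces with dim 𝓔_i(x) = k, A^n_x 𝓔_i(x) = 𝓔_i(T^n x) and A^n_x 𝓕_i(x) ⊆ 𝓕_i(T^n x) for i = 1,2 and all x ∈ X, n ≥ 1, together with constants K > 0 and τ ∈ (0,1) such that for all x ∈ X, n ≥ 1, and i = 1,2: ‖A^n_x|_{𝓕_i(x)}‖ ≤ K c_{k+1}(A^n_x), m(A^n_x|_{𝓔_i(x)}) ≥ K^{-1} c_k(A^n_x), and c_{k+1}(A^n_x) ≤ K τ^n c_k(A^n_x). Then 𝓔_1(x) = 𝓔_2(x) and 𝓕_1(x) = 𝓕_2(x) for every x ∈ X. -/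

import Mathlib

/-!
If `𝓕₁` vanishes at some point, then `dim V = k`, so every `𝓔ᵢ x` is `V` and every `𝓕ᵢ x` is `0`.
Otherwise injectivity gives `c_k(A^n_x) > 0` for all `n ≥ 1`, and the hypotheses combine to a
domination estimate: vectors of any `𝓕ᵢ x` are contracted by `A^n_x`, relative to vectors of any
`𝓔ⱼ x`, by a factor `K ^ 3 τ ^ n` (`norm_le_of_mem_slow`, `norm_ge_of_mem_fast`).

* `𝓕₁ x ≤ 𝓕₂ x`: decompose `v ∈ 𝓕₁ x` as `e + f` in `𝓔₂ x ⊕ 𝓕₂ x`. Both `v` and `f` are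
  contracted, hence so is `e = v - f`, and domination forces `e = 0` as `n → ∞`. This is
  `slow_le`; the other inclusion is symmetric.
* `𝓔₁ x ≤ 𝓔₂ x`: given `v ∈ 𝓔₁ x`, pull it back to `w ∈ 𝓔₁ (T⁻ⁿ x)` and decompose `w = e + f` in
  `𝓔₂ ⊕ 𝓕₂` at `T⁻ⁿ x`. By equivariance the `𝓕₂`-component of `v` is `Aⁿ f`, and domination gives
  `‖Aⁿ f‖ ≤ C K ^ 3 τ ^ n ‖v‖`, where `C` bounds the projections of the second splitting. Since
  `C` is uniform over the compact space `X` (`exists_uniform_bound`), this component is `0`.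
  Equality follows from equality of dimensions.
-/

open Metric Filter MeasureTheory Topology

noncomputable section

section Defs

variable {V W : Type*} [NormedAddCommGroup V] [NormedSpace ℝ V]
  [NormedAddCommGroup W] [NormedSpace ℝ W]

/-- The operator norm of the restriction of `A` to the subspace `E`, `‖A|_E‖`. -/
noncomputable def restrNorm (A : V →L[ℝ] W) (E : Submodule ℝ V) : ℝ :=
  ‖A.comp E.subtypeL‖

/-- The minimal norm `m(A|_E) = inf {‖A v‖ : v ∈ E, ‖v‖ = 1}`. -/
noncomputable def minNorm (A : V →L[ℝ] W) (E : Submodule ℝ V) : ℝ :=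
  sInf {r : ℝ | ∃ v ∈ E, ‖v‖ = 1 ∧ r = ‖A v‖}

/-- `F` is a closed subspace of codimension `n`. -/
def ClosedCodim (F : Submodule ℝ V) (n : ℕ) : Prop :=
  IsClosed (F : Set V) ∧ FiniteDimensional ℝ (V ⧸ F) ∧ Module.finrank ℝ (V ⧸ F) = n

/-- The `k`-th Gelfand number of `A` (meaningful for `k ≥ 1`):
`c_k(A) = inf {‖A|_F‖ : F a closed subspace of codimension k - 1}`. -/
noncomputable def gelfand (k : ℕ) (A : V →L[ℝ] W) : ℝ :=
  sInf {r : ℝ | ∃ F : Submodule ℝ V, ClosedCodim F (k - 1) ∧ r = restrNorm A F}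

/-- The unit sphere of a subspace. -/
def subSphere (E : Submodule ℝ V) : Set V := {v : V | v ∈ E ∧ ‖v‖ = 1}

/-- Hausdorff distance between the unit spheres of two subspaces. -/
noncomputable def dHaus (E F : Submodule ℝ V) : ℝ :=
  Metric.hausdorffDist (subSphere E) (subSphere F)

/-- `π` is the (bounded) projection onto `E` parallel to `F`. -/
def IsProjOn (π : V →L[ℝ] V) (E F : Submodule ℝ V) : Prop :=
  (∀ v ∈ E, π v = v) ∧ (∀ v ∈ F, π v = 0)

open scoped Classical in
/-- The (unsigned) determinant `det(A|E)` of `A` restricted to a finite-dimensional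
subspace `E`, defined as the ratio of the induced (Haar) volume of the image `A B_E`
of the unit ball of `E` to that of the unit ball of `A E`; it equals `0` when `A|_E`
is not injective.  (The value of the ratio does not depend on the choice of linear
equivalence with `ℝ^k`, since any two such differ by a linear automorphism, which
rescales both volumes by the same factor.) -/
noncomputable def detOn (A : V →L[ℝ] W) (E : Submodule ℝ V) : ℝ :=
  if h : Nonempty ((↥(E.map A.toLinearMap)) ≃ₗ[ℝ] (Fin (Module.finrank ℝ ↥E) → ℝ)) then
    (volume (⇑h.some '' {w : ↥(E.map A.toLinearMap) | ∃ v ∈ E, ‖v‖ ≤ 1 ∧ A v = (w : W)})).toReal /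
      (volume (⇑h.some '' {w : ↥(E.map A.toLinearMap) | ‖(w : W)‖ ≤ 1})).toReal
  else 0

/-- `V_k(A)`: the maximal `k`-dimensional volume growth of `A`,
`V_k(A) = sup {det(A|E) : E ⊆ V a k-dimensional subspace}`. -/
noncomputable def volGrowth (k : ℕ) (A : V →L[ℝ] W) : ℝ :=
  sSup {r : ℝ | ∃ E : Submodule ℝ V, FiniteDimensional ℝ ↥E ∧ Module.finrank ℝ ↥E = k ∧
    r = detOn A E}

/-- `V_k(A|_G)`: maximal volume growth among `k`-dimensional subspaces of `G`. -/
noncomputable def volGrowthOn (k : ℕ) (A : V →L[ℝ] W) (G : Submodule ℝ V) : ℝ :=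
  sSup {r : ℝ | ∃ E : Submodule ℝ V, E ≤ G ∧ FiniteDimensional ℝ ↥E ∧
    Module.finrank ℝ ↥E = k ∧ r = detOn A E}

/-- `A : X × ℕ → L(V)` is a linear cocycle over `T`. -/
def IsCocycle {X : Type*} (T : X → X) (A : X → ℕ → (V →L[ℝ] V)) : Prop :=
  (∀ x, A x 0 = 1) ∧ ∀ x n m, A x (n + m) = (A (T^[m] x) n).comp (A x m)

/-- Continuity of a subspace-valued map with respect to the Hausdorff distance
between unit spheres. -/
def SubContinuous {X : Type*} [TopologicalSpace X] (𝓔 : X → Submodule ℝ V) : Prop :=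
  ∀ x : X, ∀ ε > (0 : ℝ), ∀ᶠ y in nhds x, dHaus (𝓔 x) (𝓔 y) < ε

end Defs

end

section Helpers

variable {V : Type*} [NormedAddCommGroup V] [NormedSpace ℝ V]

lemma restrNorm_nonneg (A : V →L[ℝ] V) (E : Submodule ℝ V) : 0 ≤ restrNorm A E :=
  norm_nonneg (A.comp E.subtypeL)

lemma norm_le_restrNorm (A : V →L[ℝ] V) (E : Submodule ℝ V) {v : V} (hv : v ∈ E) :
    ‖A v‖ ≤ restrNorm A E * ‖v‖ :=
  (A.comp E.subtypeL).le_opNorm ⟨v, hv⟩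

lemma minNorm_mul_le (A : V →L[ℝ] V) (E : Submodule ℝ V) {v : V} (hv : v ∈ E) :
    minNorm A E * ‖v‖ ≤ ‖A v‖ := by
  rcases eq_or_ne v 0 with rfl | h0
  · simp
  have hpos : 0 < ‖v‖ := norm_pos_iff.2 h0
  have h : minNorm A E ≤ ‖A (‖v‖⁻¹ • v)‖ := by
    refine csInf_le ⟨0, ?_⟩ ⟨_, E.smul_mem _ hv, ?_, rfl⟩
    · rintro r ⟨w, -, -, rfl⟩
      exact norm_nonneg _
    · rw [norm_smul, norm_inv, norm_norm, inv_mul_cancel₀ hpos.ne']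
  rw [map_smul, norm_smul, norm_inv, norm_norm] at h
  calc minNorm A E * ‖v‖ ≤ ‖v‖⁻¹ * ‖A v‖ * ‖v‖ := by gcongr
    _ = ‖A v‖ := by field_simp

lemma gelfand_nonneg (k : ℕ) (A : V →L[ℝ] V) : 0 ≤ gelfand k A := by
  refine Real.sInf_nonneg ?_
  rintro r ⟨F, -, rfl⟩
  exact restrNorm_nonneg A F

/-- If an injective `A` contracts the nonzero subspace `F` at the rate prescribed by a dominated
splitting, then `c_k(A)` cannot vanish. -/
lemma gelfand_pos {A : V →L[ℝ] V} (hinj : Function.Injective A) {F : Submodule ℝ V}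
    (hF : F ≠ ⊥) {k : ℕ} {K t : ℝ} (hK : 0 < K)
    (h1 : restrNorm A F ≤ K * gelfand (k + 1) A)
    (h2 : gelfand (k + 1) A ≤ K * t * gelfand k A) : 0 < gelfand k A := by
  refine lt_of_le_of_ne (gelfand_nonneg k A) fun h => hF ?_
  rw [← h, mul_zero] at h2
  have h3 : restrNorm A F ≤ 0 := h1.trans (mul_nonpos_of_nonneg_of_nonpos hK.le h2)
  rw [Submodule.eq_bot_iff]
  intro v hv
  have h4 : ‖A v‖ ≤ 0 :=
    (norm_le_restrNorm A F hv).trans (mul_nonpos_of_nonpos_of_nonneg h3 (norm_nonneg _))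
  exact hinj (by rw [map_zero]; exact norm_le_zero_iff.1 h4)

/-- Upper growth bound on the slow bundle in terms of `c_k`. -/
lemma norm_le_of_mem_slow {A : V →L[ℝ] V} {F : Submodule ℝ V} {k : ℕ} {K t : ℝ} (hK : 0 < K)
    (h1 : restrNorm A F ≤ K * gelfand (k + 1) A)
    (h2 : gelfand (k + 1) A ≤ K * t * gelfand k A) {v : V} (hv : v ∈ F) :
    ‖A v‖ ≤ K ^ 2 * t * gelfand k A * ‖v‖ := by
  refine (norm_le_restrNorm A F hv).trans (mul_le_mul_of_nonneg_right ?_ (norm_nonneg _))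
  calc restrNorm A F ≤ K * (K * t * gelfand k A) := h1.trans (by gcongr)
    _ = K ^ 2 * t * gelfand k A := by ring

/-- Lower growth bound on the fast bundle in terms of `c_k`. -/
lemma norm_ge_of_mem_fast {A : V →L[ℝ] V} {E : Submodule ℝ V} {k : ℕ} {K : ℝ} (hK : 0 < K)
    (h : K⁻¹ * gelfand k A ≤ minNorm A E) {v : V} (hv : v ∈ E) :
    gelfand k A * ‖v‖ ≤ K * ‖A v‖ := by
  calc gelfand k A * ‖v‖ = K * (K⁻¹ * gelfand k A * ‖v‖) := by field_simp
    _ ≤ K * (minNorm A E * ‖v‖) := by gcongr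
    _ ≤ K * ‖A v‖ := by gcongr; exact minNorm_mul_le A E hv

lemma eq_zero_of_norm_le_geometric {W : Type*} [NormedAddCommGroup W] {v : W} {M τ : ℝ} (hτ : τ ∈ Set.Ioo (0 : ℝ) 1)
    (h : ∀ n : ℕ, 1 ≤ n → ‖v‖ ≤ M * τ ^ n) : v = 0 := by
  have hlim : Tendsto (fun n : ℕ => M * τ ^ n) atTop (𝓝 (M * 0)) :=
    (tendsto_pow_atTop_nhds_zero_of_lt_one hτ.1.le hτ.2).const_mul M
  rw [mul_zero] at hlim
  refine norm_le_zero_iff.1 (ge_of_tendsto hlim ?_)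
  filter_upwards [eventually_ge_atTop 1] with n hn using h n hn

lemma exists_add_of_isCompl {E F : Submodule ℝ V} (h : IsCompl E F) (v : V) :
    ∃ e ∈ E, ∃ f ∈ F, e + f = v :=
  Submodule.mem_sup.1 (by rw [h.sup_eq_top]; trivial)

/-- A subspace contracted at the slow rate by a sequence of operators `B n` is contained in the
slow subspace of any splitting dominated along that sequence. -/
lemma slow_le {B : ℕ → (V →L[ℝ] V)} {F₁ E₂ F₂ : Submodule ℝ V} (hc : IsCompl E₂ F₂)
    {k : ℕ} {K τ : ℝ} (hK : 0 < K) (hτ : τ ∈ Set.Ioo (0 : ℝ) 1)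
    (hpos : ∀ n, 1 ≤ n → 0 < gelfand k (B n))
    (h1 : ∀ n, 1 ≤ n → restrNorm (B n) F₁ ≤ K * gelfand (k + 1) (B n))
    (h2 : ∀ n, 1 ≤ n → restrNorm (B n) F₂ ≤ K * gelfand (k + 1) (B n))
    (hE : ∀ n, 1 ≤ n → K⁻¹ * gelfand k (B n) ≤ minNorm (B n) E₂)
    (hgap : ∀ n, 1 ≤ n → gelfand (k + 1) (B n) ≤ K * τ ^ n * gelfand k (B n)) :
    F₁ ≤ F₂ := by
  intro v hv
  obtain ⟨e, he, f, hf, rfl⟩ := exists_add_of_isCompl hc v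
  have he0 : e = 0 := by
    refine eq_zero_of_norm_le_geometric (M := K ^ 3 * (‖e + f‖ + ‖f‖)) hτ fun n hn => ?_
    have a1 := norm_le_of_mem_slow hK (h1 n hn) (hgap n hn) hv
    have a2 := norm_le_of_mem_slow hK (h2 n hn) (hgap n hn) hf
    have a3 := norm_ge_of_mem_fast hK (hE n hn) he
    have a4 : ‖B n e‖ ≤ ‖B n (e + f)‖ + ‖B n f‖ := by
      have : B n e = B n (e + f) - B n f := by simp
      rw [this]
      exact norm_sub_le _ _
    refine le_of_mul_le_mul_left ?_ (hpos n hn)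
    calc gelfand k (B n) * ‖e‖ ≤ K * ‖B n e‖ := a3
      _ ≤ K * (K ^ 2 * τ ^ n * gelfand k (B n) * ‖e + f‖
            + K ^ 2 * τ ^ n * gelfand k (B n) * ‖f‖) := by gcongr; linarith
      _ = gelfand k (B n) * (K ^ 3 * (‖e + f‖ + ‖f‖) * τ ^ n) := by ring
  rw [he0, zero_add]
  exact hf

lemma subSphere_nonempty {E : Submodule ℝ V} (hE : E ≠ ⊥) : (subSphere E).Nonempty := by
  obtain ⟨v, hv, h0⟩ := E.exists_mem_ne_zero_of_ne_bot hE
  refine ⟨‖v‖⁻¹ • v, E.smul_mem _ hv, ?_⟩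
  rw [norm_smul, norm_inv, norm_norm, inv_mul_cancel₀ (norm_ne_zero_iff.2 h0)]

lemma isBounded_subSphere (E : Submodule ℝ V) : Bornology.IsBounded (subSphere E) :=
  (isBounded_sphere (x := (0 : V)) (r := 1)).subset fun v hv => by simpa using hv.2

/-- The homogeneous form of closeness of unit spheres. Both subspaces must be nonzero: the
Hausdorff distance from the empty sphere has the junk value `0`. -/
lemma exists_near_of_dHaus_lt {E E' : Submodule ℝ V} (hE : E ≠ ⊥) (hE' : E' ≠ ⊥) {ε : ℝ}
    (h : dHaus E E' < ε) {v : V} (hv : v ∈ E') :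
    ∃ w ∈ E, ‖w‖ = ‖v‖ ∧ ‖w - v‖ ≤ ε * ‖v‖ := by
  rcases eq_or_ne v 0 with rfl | h0
  · exact ⟨0, E.zero_mem, by simp⟩
  have hn : ‖v‖ ≠ 0 := norm_ne_zero_iff.2 h0
  have hu : ‖v‖⁻¹ • v ∈ subSphere E' := by
    refine ⟨E'.smul_mem _ hv, ?_⟩
    rw [norm_smul, norm_inv, norm_norm, inv_mul_cancel₀ hn]
  obtain ⟨u, hu, hd⟩ := exists_dist_lt_of_hausdorffDist_lt' hu h
    (hausdorffEDist_ne_top_of_nonempty_of_bounded (subSphere_nonempty hE) (subSphere_nonempty hE')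
      (isBounded_subSphere E) (isBounded_subSphere E'))
  refine ⟨‖v‖ • u, E.smul_mem _ hu.1, ?_, ?_⟩
  · rw [norm_smul, norm_norm, hu.2, mul_one]
  · have : ‖v‖ • u - v = ‖v‖ • (u - ‖v‖⁻¹ • v) := by
      rw [smul_sub, smul_smul, mul_inv_cancel₀ hn, one_smul]
    rw [this, norm_smul, norm_norm, mul_comm, ← dist_eq_norm]
    gcongr

/-- Boundedness of the projections of a topological direct sum, by the open mapping theorem. -/
lemma exists_bound_of_isCompl [CompleteSpace V] {E F : Submodule ℝ V} (h : IsCompl E F)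
    (hE : IsClosed (E : Set V)) (hF : IsClosed (F : Set V)) :
    ∃ C > 0, ∀ e ∈ E, ∀ f ∈ F, ‖e‖ + ‖f‖ ≤ C * ‖e + f‖ := by
  have := hE.completeSpace_coe
  have := hF.completeSpace_coe
  let Φ : (E × F) ≃L[ℝ] V := (E.prodEquivOfIsCompl F h).toContinuousLinearEquivOfContinuous
    (E.subtypeL.coprod F.subtypeL).continuous
  refine ⟨2 * ‖(Φ.symm : V →L[ℝ] E × F)‖ + 1, by positivity, fun e he f hf => ?_⟩
  have hΦ : Φ.symm (e + f) = (⟨e, he⟩, ⟨f, hf⟩) := by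
    rw [ContinuousLinearEquiv.symm_apply_eq]
    rfl
  have hle : ‖Φ.symm (e + f)‖ ≤ ‖(Φ.symm : V →L[ℝ] E × F)‖ * ‖e + f‖ :=
    (Φ.symm : V →L[ℝ] E × F).le_opNorm (e + f)
  have h1 : ‖e‖ ≤ ‖Φ.symm (e + f)‖ := by
    rw [hΦ]
    exact norm_fst_le (((⟨e, he⟩ : E), (⟨f, hf⟩ : F)))
  have h2 : ‖f‖ ≤ ‖Φ.symm (e + f)‖ := by
    rw [hΦ]
    exact norm_snd_le (((⟨e, he⟩ : E), (⟨f, hf⟩ : F)))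
  nlinarith [norm_nonneg (e + f)]

/-- The projections of a continuous splitting over a compact space are uniformly bounded. -/
lemma exists_uniform_bound {X : Type*} [TopologicalSpace X] [CompactSpace X] [CompleteSpace V]
    {𝓔 𝓕 : X → Submodule ℝ V} (cE : SubContinuous 𝓔) (cF : SubContinuous 𝓕)
    (hE : ∀ x, IsClosed (𝓔 x : Set V)) (hF : ∀ x, IsClosed (𝓕 x : Set V))
    (hc : ∀ x, IsCompl (𝓔 x) (𝓕 x)) (nE : ∀ x, 𝓔 x ≠ ⊥) (nF : ∀ x, 𝓕 x ≠ ⊥) :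
    ∃ C > 0, ∀ x, ∀ e ∈ 𝓔 x, ∀ f ∈ 𝓕 x, ‖e‖ + ‖f‖ ≤ C * ‖e + f‖ := by
  suffices h : ∃ C > 0, ∀ x ∈ (Set.univ : Set X), ∀ e ∈ 𝓔 x, ∀ f ∈ 𝓕 x,
      ‖e‖ + ‖f‖ ≤ C * ‖e + f‖ by simpa using h
  refine isCompact_univ.induction_on
    (p := fun s : Set X => ∃ C > 0, ∀ x ∈ s, ∀ e ∈ 𝓔 x, ∀ f ∈ 𝓕 x, ‖e‖ + ‖f‖ ≤ C * ‖e + f‖)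
    ⟨1, one_pos, by simp⟩ ?_ ?_ ?_
  · rintro s t hst ⟨C, hC, h⟩
    exact ⟨C, hC, fun x hx => h x (hst hx)⟩
  · rintro s t ⟨C, hC, h⟩ ⟨D, hD, h'⟩
    refine ⟨max C D, lt_max_of_lt_left hC, ?_⟩
    rintro x (hx | hx) e he f hf
    · exact (h x hx e he f hf).trans (by gcongr; exact le_max_left _ _)
    · exact (h' x hx e he f hf).trans (by gcongr; exact le_max_right _ _)
  · intro x _
    obtain ⟨C, hC, h⟩ := exists_bound_of_isCompl (hc x) (hE x) (hF x)
    -- Perturbing by relative size `1 / (2 C)` at most doubles the constant at `x`.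
    have hε : 0 < 1 / (2 * C) := by positivity
    refine ⟨{y | dHaus (𝓔 x) (𝓔 y) < 1 / (2 * C) ∧ dHaus (𝓕 x) (𝓕 y) < 1 / (2 * C)},
      mem_nhdsWithin_of_mem_nhds ((cE x _ hε).and (cF x _ hε)), 2 * C, by positivity, ?_⟩
    rintro y ⟨hy1, hy2⟩ e he f hf
    obtain ⟨e', he', hen, hed⟩ := exists_near_of_dHaus_lt (nE x) (nE y) hy1 he
    obtain ⟨f', hf', hfn, hfd⟩ := exists_near_of_dHaus_lt (nF x) (nF y) hy2 hf
    have key := h e' he' f' hf'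
    have tri : ‖e' + f'‖ ≤ ‖e + f‖ + (‖e' - e‖ + ‖f' - f‖) := by
      have : e' + f' = (e + f) + ((e' - e) + (f' - f)) := by abel
      rw [this]
      exact (norm_add_le _ _).trans (by gcongr; exact norm_add_le _ _)
    have : ‖e‖ + ‖f‖ ≤ C * ‖e + f‖ + (‖e‖ + ‖f‖) / 2 := by
      calc ‖e‖ + ‖f‖ = ‖e'‖ + ‖f'‖ := by rw [hen, hfn]
        _ ≤ C * ‖e' + f'‖ := key
        _ ≤ C * (‖e + f‖ + (1 / (2 * C) * ‖e‖ + 1 / (2 * C) * ‖f‖)) := by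
          gcongr
          linarith
        _ = C * ‖e + f‖ + (‖e‖ + ‖f‖) / 2 := by field_simp
    linarith

end Helpers

/-- **Lemma 4.3 (uniqueness of dominated splittings).** -/
theorem dominated_splitting_unique
    {X V : Type*} [TopologicalSpace X] [CompactSpace X]
    [NormedAddCommGroup V] [NormedSpace ℝ V] [CompleteSpace V]
    (T : X ≃ₜ X) (A : X → ℕ → (V →L[ℝ] V))
    (hcoc : IsCocycle (⇑T) A)
    (hcont : Continuous fun x => A x 1)
    (hinj : ∀ x n, Function.Injective (A x n))
    (k : ℕ) (hk : 1 ≤ k)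
    (𝓔₁ 𝓕₁ 𝓔₂ 𝓕₂ : X → Submodule ℝ V)
    (hcont₁ : SubContinuous 𝓔₁ ∧ SubContinuous 𝓕₁)
    (hcont₂ : SubContinuous 𝓔₂ ∧ SubContinuous 𝓕₂)
    (hclosed : ∀ x, IsClosed ((𝓔₁ x : Set V)) ∧ IsClosed ((𝓕₁ x : Set V)) ∧
      IsClosed ((𝓔₂ x : Set V)) ∧ IsClosed ((𝓕₂ x : Set V)))
    (hcompl : ∀ x, IsCompl (𝓔₁ x) (𝓕₁ x) ∧ IsCompl (𝓔₂ x) (𝓕₂ x))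
    (hdim : ∀ x, (FiniteDimensional ℝ ↥(𝓔₁ x) ∧ Module.finrank ℝ ↥(𝓔₁ x) = k) ∧
      (FiniteDimensional ℝ ↥(𝓔₂ x) ∧ Module.finrank ℝ ↥(𝓔₂ x) = k))
    (hequivE : ∀ x : X, ∀ n : ℕ, 1 ≤ n →
      (𝓔₁ x).map (A x n).toLinearMap = 𝓔₁ ((⇑T)^[n] x) ∧
      (𝓔₂ x).map (A x n).toLinearMap = 𝓔₂ ((⇑T)^[n] x))
    (hequivF : ∀ x : X, ∀ n : ℕ, 1 ≤ n →
      (𝓕₁ x).map (A x n).toLinearMap ≤ 𝓕₁ ((⇑T)^[n] x) ∧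
      (𝓕₂ x).map (A x n).toLinearMap ≤ 𝓕₂ ((⇑T)^[n] x))
    (K τ : ℝ) (hK : 0 < K) (hτ : τ ∈ Set.Ioo (0:ℝ) 1)
    (hF : ∀ x : X, ∀ n : ℕ, 1 ≤ n →
      restrNorm (A x n) (𝓕₁ x) ≤ K * gelfand (k+1) (A x n) ∧
      restrNorm (A x n) (𝓕₂ x) ≤ K * gelfand (k+1) (A x n))
    (hE : ∀ x : X, ∀ n : ℕ, 1 ≤ n →
      K⁻¹ * gelfand k (A x n) ≤ minNorm (A x n) (𝓔₁ x) ∧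
      K⁻¹ * gelfand k (A x n) ≤ minNorm (A x n) (𝓔₂ x))
    (hgap : ∀ x : X, ∀ n : ℕ, 1 ≤ n →
      gelfand (k+1) (A x n) ≤ K * τ ^ n * gelfand k (A x n)) :
    ∀ x : X, 𝓔₁ x = 𝓔₂ x ∧ 𝓕₁ x = 𝓕₂ x := by
  by_cases hbot : ∃ y, 𝓕₁ y = ⊥
  · -- Degenerate case: `V` has dimension `k`.
    obtain ⟨y, hy⟩ := hbot
    have htop : 𝓔₁ y = ⊤ := by simpa [hy] using (hcompl y).1.sup_eq_top
    have hfin : FiniteDimensional ℝ V := by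
      have := (hdim y).1.1
      rw [htop] at this
      exact Module.Finite.equiv (Submodule.topEquiv (R := ℝ) (M := V))
    have hV : Module.finrank ℝ V = k := by
      have := (hdim y).1.2
      rwa [htop, finrank_top] at this
    intro x
    have e1 : 𝓔₁ x = ⊤ := Submodule.eq_top_of_finrank_eq ((hdim x).1.2.trans hV.symm)
    have e2 : 𝓔₂ x = ⊤ := Submodule.eq_top_of_finrank_eq ((hdim x).2.2.trans hV.symm)
    have f1 : 𝓕₁ x = ⊥ := by simpa [e1] using (hcompl x).1.inf_eq_bot
    have f2 : 𝓕₂ x = ⊥ := by simpa [e2] using (hcompl x).2.inf_eq_bot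
    rw [e1, e2, f1, f2]
    exact ⟨rfl, rfl⟩
  push Not at hbot
  have hpos : ∀ x n, 1 ≤ n → 0 < gelfand k (A x n) := fun x n hn =>
    gelfand_pos (hinj x n) (hbot x) hK (hF x n hn).1 (hgap x n hn)
  have hFeq : ∀ x, 𝓕₁ x = 𝓕₂ x := fun x => le_antisymm
    (slow_le (B := A x) (hcompl x).2 hK hτ (hpos x) (fun n hn => (hF x n hn).1)
      (fun n hn => (hF x n hn).2) (fun n hn => (hE x n hn).2) (hgap x))
    (slow_le (B := A x) (hcompl x).1 hK hτ (hpos x) (fun n hn => (hF x n hn).2)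
      (fun n hn => (hF x n hn).1) (fun n hn => (hE x n hn).1) (hgap x))
  obtain ⟨C, hC, hbound⟩ := exists_uniform_bound hcont₂.1 hcont₂.2
    (fun x => (hclosed x).2.2.1) (fun x => (hclosed x).2.2.2) (fun x => (hcompl x).2)
    (fun x h => by
      have := (hdim x).2.2
      rw [h, finrank_bot] at this
      omega)
    (fun x => hFeq x ▸ hbot x)
  refine fun x => ⟨?_, hFeq x⟩
  have := (hdim x).2.1
  refine Submodule.eq_of_le_of_finrank_eq ?_ ((hdim x).1.2.trans (hdim x).2.2.symm)
  intro v hv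
  obtain ⟨e₀, he₀, f₀, hf₀, hsum⟩ := exists_add_of_isCompl (hcompl x).2 v
  have hf0 : f₀ = 0 := by
    refine eq_zero_of_norm_le_geometric (M := C * K ^ 3 * ‖v‖) hτ fun n hn => ?_
    obtain ⟨y, rfl⟩ : ∃ y, (⇑T)^[n] y = x := T.surjective.iterate n x
    rw [← (hequivE y n hn).1] at hv
    obtain ⟨w, hw, hwv⟩ := Submodule.mem_map.1 hv
    obtain ⟨e, he, f, hf, hef⟩ := exists_add_of_isCompl (hcompl y).2 w
    have hAe : A y n e ∈ 𝓔₂ ((⇑T)^[n] y) := by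
      rw [← (hequivE y n hn).2]
      exact Submodule.mem_map_of_mem he
    have hAf : A y n f ∈ 𝓕₂ ((⇑T)^[n] y) := (hequivF y n hn).2 (Submodule.mem_map_of_mem hf)
    have hwv' : A y n w = v := hwv
    have hAsum : A y n e + A y n f = v := by rw [← map_add, hef, hwv']
    -- The decomposition of `v` is unique.
    have hff : f₀ = A y n f := by
      have hd : e₀ - A y n e = A y n f - f₀ := by
        rw [sub_eq_sub_iff_add_eq_add, hsum, add_comm, hAsum]
      have h0 : A y n f - f₀ = 0 := Submodule.disjoint_def.1 (hcompl _).2.disjoint _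
        (hd ▸ Submodule.sub_mem _ he₀ hAe) (Submodule.sub_mem _ hAf hf₀)
      exact (sub_eq_zero.1 h0).symm
    have hfw : ‖f‖ ≤ C * ‖w‖ := by
      have := hbound y e he f hf
      rw [hef] at this
      linarith [norm_nonneg e]
    have a1 := norm_le_of_mem_slow hK (hF y n hn).2 (hgap y n hn) hf
    have a2 := norm_ge_of_mem_fast hK (hE y n hn).1 hw
    have hτn : 0 < τ ^ n := pow_pos hτ.1 n
    have hg := hpos y n hn
    calc ‖f₀‖ = ‖A y n f‖ := by rw [hff]
      _ ≤ K ^ 2 * τ ^ n * gelfand k (A y n) * ‖f‖ := a1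
      _ ≤ K ^ 2 * τ ^ n * gelfand k (A y n) * (C * ‖w‖) := by gcongr
      _ = C * K ^ 2 * τ ^ n * (gelfand k (A y n) * ‖w‖) := by ring
      _ ≤ C * K ^ 2 * τ ^ n * (K * ‖A y n w‖) := by gcongr
      _ = C * K ^ 3 * ‖v‖ * τ ^ n := by rw [hwv']; ring
  rw [← hsum, hf0, add_zero]
  exact he₀
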